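/- Define $h : [0,2] \to \mathbb{R}$ by $h(x) = |x - \tfrac{1}{2}|$ for $0 \le x \le 1$ and $h(x) = |x - \tfrac{3}{2}|$ for $1 < x \le 2$, and define $K : [0,2] \to \mathcal{P}([0,2])$ by $K(x) = [-\tfrac{3}{2}x + \tfrac{3}{2},\, 2]$ for $0 \le x \le 1$ and $K(x) = [0,\, -\tfrac{3}{2}x + \tfrac{7}{2}]$ for $1 < x \le 2$. Then $h$ is continuous, and the quasi-optimization problem associated with $h$ and $K$ has no solution: there is no $x_0 \in [0,2]$ with $x_0 \in K(x_0)$ and $h(x_0) \le h(z)$ for all $z \in K(x_0)$. -/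

import Mathlib

/-!
Continuity holds because the two branches of `h` agree at `x = 1`. For the nonexistence claim, a
fixed point `x₀ ≤ 1` of `K` satisfies `x₀ ≥ 3/5`, while `3/2 ∈ K x₀` is a zero of `h`; a minimizer
would thus be a zero of `h` in `[3/5, 1]`, and there is none. Symmetrically, a fixed point
`x₀ > 1` satisfies `x₀ ≤ 7/5`, and `1/2 ∈ K x₀` is a zero of `h`, which has no zero in `(1, 7/5]`.
-/

/-- With `h x = |x - 1/2|` on `[0,1]`, `h x = |x - 3/2|` on `(1,2]`, and
`K x = [-3x/2 + 3/2, 2]` for `0 ≤ x ≤ 1`, `K x = [0, -3x/2 + 7/2]` for `1 < x ≤ 2`,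
the function `h` is continuous on `[0,2]`, but the quasi-optimization problem associated
with `h` and `K` has no solution. -/
theorem qopt_counterexample
    (h : ℝ → ℝ) (K : ℝ → Set ℝ)
    (hh : ∀ x ∈ Set.Icc (0:ℝ) 2, h x = if x ≤ 1 then |x - 1/2| else |x - 3/2|)
    (hK : ∀ x ∈ Set.Icc (0:ℝ) 2, K x =
      if x ≤ 1 then Set.Icc (-(3/2) * x + 3/2) 2 else Set.Icc 0 (-(3/2) * x + 7/2)) :
    ContinuousOn h (Set.Icc (0:ℝ) 2) ∧
    ¬ ∃ x₀ ∈ Set.Icc (0:ℝ) 2, x₀ ∈ K x₀ ∧ ∀ z ∈ K x₀, h x₀ ≤ h z := by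
  constructor
  · refine ContinuousOn.congr (Continuous.continuousOn ?_) hh
    refine Continuous.if_le (by fun_prop) (by fun_prop) continuous_id continuous_const ?_
    intro x hx
    have hx1 : x = 1 := hx
    subst hx1
    norm_num [abs_of_pos, abs_of_neg]
  · rintro ⟨x, hx, hxK, hmin⟩
    have hx' := hh x hx
    rw [hK x hx] at hxK hmin
    obtain ⟨hx0, hx2⟩ := hx
    split_ifs at hxK hmin hx' with h1
    · have hz : h (3/2) = 0 := by
        rw [hh _ ⟨by norm_num, by norm_num⟩]; norm_num
      have hlow := hxK.1
      have hle := hmin (3/2) ⟨by linarith, by norm_num⟩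
      have := le_abs_self (x - 1/2)
      linarith
    · have hz : h (1/2) = 0 := by
        rw [hh _ ⟨by norm_num, by norm_num⟩]; norm_num
      have hup := hxK.2
      have hle := hmin (1/2) ⟨by norm_num, by linarith⟩
      have := neg_abs_le (x - 3/2)
      linarith
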